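/- For every p ∈ (1,2] there exists a constant K_p ∈ (0,∞) such that for every integer n ≥ 2 the bi-Lipschitz distortion of the ball B_n in the sequence space ℓ_p satisfies c_{ℓ_p}(B_n, d_W) ≥ K_p √(log n); equivalently, if D ≥ 1 and f : B_n → ℓ_p satisfies d_W(x,y) ≤ ‖f(x)−f(y)‖_p ≤ D·d_W(x,y) for all x,y ∈ B_n, then D ≥ K_p √(log n). -/

import Mathlib

/-- The discrete Heisenberg group, as ℤ³ with the Heisenberg multiplication
(equivalently, unit upper-triangular 3×3 integer matrices). -/
@[ext]
structure DH where
  x : ℤ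
  y : ℤ
  z : ℤ

namespace DH

instance : Mul DH := ⟨fun a b => ⟨a.x + b.x, a.y + b.y, a.z + b.z + a.x * b.y⟩⟩
instance : One DH := ⟨⟨0, 0, 0⟩⟩
instance : Inv DH := ⟨fun a => ⟨-a.x, -a.y, -a.z + a.x * a.y⟩⟩

lemma mul_def (a b : DH) : a * b = ⟨a.x + b.x, a.y + b.y, a.z + b.z + a.x * b.y⟩ := rfl
lemma one_def : (1 : DH) = ⟨0, 0, 0⟩ := rfl
lemma inv_def (a : DH) : a⁻¹ = ⟨-a.x, -a.y, -a.z + a.x * a.y⟩ := rfl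

instance : Group DH where
  mul_assoc a b c := by
    simp only [mul_def, mk.injEq]
    refine ⟨by ring, by ring, by ring⟩
  one_mul a := by simp [mul_def, one_def]
  mul_one a := by simp [mul_def, one_def]
  inv_mul_cancel a := by
    simp only [mul_def, inv_def, one_def, mk.injEq]
    refine ⟨by ring, by ring, by ring⟩

/-- The generator `a`. -/
def gA : DH := ⟨1, 0, 0⟩

/-- The generator `b`. -/
def gB : DH := ⟨0, 1, 0⟩

/-- The commutator `c = aba⁻¹b⁻¹`, a generator of the center. -/
def gC : DH := gA * gB * gA⁻¹ * gB⁻¹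

/-- Word length with respect to the symmetric generating set `{a, b, a⁻¹, b⁻¹}`. -/
noncomputable def wordLen (g : DH) : ℕ :=
  sInf {n | ∃ l : List DH, l.length = n ∧
    (∀ s ∈ l, s ∈ ({gA, gB, gA⁻¹, gB⁻¹} : Set DH)) ∧ l.prod = g}

/-- The left-invariant word metric on the discrete Heisenberg group. -/
noncomputable def dW (g h : DH) : ℕ := wordLen (g⁻¹ * h)

/-- The closed ball of radius `n` centered at the identity. -/
def Ball (n : ℕ) : Set DH := {g | dW g 1 ≤ n}

end DH

/-!
For `1 < p ≤ 2` the space `ℓ_p` is uniformly convex of power type `2`, hence so is `ℓ₂(ℍ; ℓ_p)`.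
Along a norm-nonincreasing operator `T`, uniform convexity makes the dyadic ergodic averages of a
vector satisfy a Littlewood–Paley inequality: the sum over scales of their squared differences is
at most a constant times the squared norm of the vector.

In an isometric representation of `ℍ` take `T` to be the action of the central generator `c`. Since
`c ^ m` is a product of `O(√m)` generators, the increment of a vector along `c ^ 2 ^ k` is at scale
`k` controlled by its horizontal increments along `a` and `b`. As `c` is central, the
Littlewood–Paley blocks commute with `a` and `b`, so this bound can be applied block by block and
summed. The result is a vertical-versus-horizontal Poincaré inequality: the sum over all scales of
the normalized vertical energies is at most a constant times a single horizontal energy.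

Apply it, in the right regular representation on `ℓ₂(ℍ; X)`, to an embedding of a ball multiplied by
a cut-off. Each of the about `log n` scales contributes a fixed amount to the vertical side, because
the embedding does not contract distances, while the horizontal side is `O(D ^ 2)`.
-/

/-- Uniform convexity of power type `2` with constant `δ`, measured in the exponent `p`. All
exponents give the same notion up to the value of `δ`; the exponent `p` is the one inherited by
`ℓ_p`-sums, and the exponent `2` is the one that controls martingale-type square functions. -/
def IsTwoUniformlyConvex (p δ : ℝ) (E : Type*) [NormedAddCommGroup E] : Prop :=
  ∀ x y : E, (‖x‖ ^ 2 + δ * ‖y‖ ^ 2) ^ (p / 2) ≤ (‖x + y‖ ^ p + ‖x - y‖ ^ p) / 2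

section RealLine

variable {p : ℝ}

lemma sq_rpow_half {t : ℝ} (ht : 0 ≤ t) : (t ^ 2) ^ (p / 2) = t ^ p := by
  rw [← Real.rpow_natCast_mul ht, Nat.cast_ofNat, mul_div_cancel₀ p two_ne_zero]

lemma one_add_mul_sq_le_rpow_add_rpow (hp1 : 1 ≤ p) (hp2 : p ≤ 2) {u : ℝ} (hu0 : 0 ≤ u)
    (hu1 : u ≤ 1) :
    1 + p / 2 * ((p - 1) / 2 * u ^ 2) ≤ ((1 + u) ^ p + (1 - u) ^ p) / 2 := by
  let F : ℝ → ℝ := fun u => ((1 + u) ^ p + (1 - u) ^ p) / 2 - p / 2 * ((p - 1) / 2 * u ^ 2)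
  have hderiv (x : ℝ) :
      HasDerivAt F (p / 2 * ((1 + x) ^ (p - 1) - (1 - x) ^ (p - 1) - (p - 1) * x)) x := by
    have hadd := ((hasDerivAt_id x).const_add 1).rpow_const (p := p) (Or.inr hp1)
    have hsub := ((hasDerivAt_id x).const_sub 1).rpow_const (p := p) (Or.inr hp1)
    have hsq := (((hasDerivAt_id x).pow 2).const_mul ((p - 1) / 2)).const_mul (p / 2)
    refine (((hadd.add hsub).div_const 2).sub hsq).congr_deriv ?_
    simp only [id, Nat.cast_ofNat]
    ring
  have hmono : MonotoneOn F (Set.Icc 0 1) := by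
    refine monotoneOn_of_deriv_nonneg (convex_Icc 0 1)
      (fun x _ => (hderiv x).continuousAt.continuousWithinAt)
      (fun x _ => (hderiv x).differentiableAt.differentiableWithinAt) fun x hx => ?_
    rw [interior_Icc] at hx
    rw [(hderiv x).deriv]
    have hlow : 1 ≤ (1 + x) ^ (p - 1) := Real.one_le_rpow (by linarith [hx.1]) (by linarith)
    have hup : (1 - x) ^ (p - 1) ≤ 1 - (p - 1) * x := by
      simpa [← sub_eq_add_neg] using
        rpow_one_add_le_one_add_mul_self (s := -x) (by linarith [hx.2])
          (by linarith : 0 ≤ p - 1) (by linarith)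
    exact mul_nonneg (by linarith) (by linarith)
  have h : F 0 ≤ F u := hmono (Set.left_mem_Icc.2 zero_le_one) ⟨hu0, hu1⟩ hu0
  norm_num [F] at h
  linarith

lemma one_add_mul_sq_rpow_le (hp1 : 1 ≤ p) (hp2 : p ≤ 2) {t : ℝ} (ht : |t| ≤ 1) :
    (1 + (p - 1) / 2 * t ^ 2) ^ (p / 2) ≤ (|1 + t| ^ p + |1 - t| ^ p) / 2 := by
  have hbernoulli :
      (1 + (p - 1) / 2 * t ^ 2) ^ (p / 2) ≤ 1 + p / 2 * ((p - 1) / 2 * t ^ 2) :=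
    rpow_one_add_le_one_add_mul_self
      (by linarith [mul_nonneg (by linarith : 0 ≤ (p - 1) / 2) (sq_nonneg t)])
      (by linarith) (by linarith)
  rw [abs_of_nonneg (by linarith [neg_abs_le t] : 0 ≤ 1 + t),
    abs_of_nonneg (by linarith [le_abs_self t] : 0 ≤ 1 - t)]
  have heven : (1 + |t|) ^ p + (1 - |t|) ^ p = (1 + t) ^ p + (1 - t) ^ p := by
    rcases abs_choice t with h | h <;> rw [h]
    rw [sub_neg_eq_add, ← sub_eq_add_neg, add_comm]
  have h := one_add_mul_sq_le_rpow_add_rpow hp1 hp2 (abs_nonneg t) ht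
  rw [sq_abs, heven] at h
  exact hbernoulli.trans h

lemma sq_add_mul_sq_rpow_le_of_abs_le (hp1 : 1 ≤ p) (hp2 : p ≤ 2) {x y : ℝ} (h : |y| ≤ |x|) :
    (x ^ 2 + (p - 1) / 2 * y ^ 2) ^ (p / 2) ≤ (|x + y| ^ p + |x - y| ^ p) / 2 := by
  rcases eq_or_ne x 0 with rfl | hx
  · have hy : y = 0 := by simpa using h
    simp [hy, show p / 2 ≠ 0 by linarith, show p ≠ 0 by linarith]
  obtain ⟨t, rfl⟩ : ∃ t, y = x * t := ⟨y / x, (mul_div_cancel₀ y hx).symm⟩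
  have ht : |t| ≤ 1 := by
    rw [abs_mul] at h
    exact le_of_mul_le_mul_left (by linarith) (abs_pos.2 hx)
  have hnonneg : 0 ≤ 1 + (p - 1) / 2 * t ^ 2 :=
    add_nonneg zero_le_one (mul_nonneg (by linarith) (sq_nonneg t))
  calc (x ^ 2 + (p - 1) / 2 * (x * t) ^ 2) ^ (p / 2)
      = (|x| ^ 2 * (1 + (p - 1) / 2 * t ^ 2)) ^ (p / 2) := by rw [sq_abs]; ring_nf
    _ = |x| ^ p * (1 + (p - 1) / 2 * t ^ 2) ^ (p / 2) := by
        rw [Real.mul_rpow (sq_nonneg _) hnonneg, sq_rpow_half (abs_nonneg x)]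
    _ ≤ |x| ^ p * ((|1 + t| ^ p + |1 - t| ^ p) / 2) := by
        gcongr
        exact one_add_mul_sq_rpow_le hp1 hp2 ht
    _ = ((|x| * |1 + t|) ^ p + (|x| * |1 - t|) ^ p) / 2 := by
        rw [Real.mul_rpow (abs_nonneg x) (abs_nonneg _),
          Real.mul_rpow (abs_nonneg x) (abs_nonneg _)]
        ring
    _ = (|x + x * t| ^ p + |x - x * t| ^ p) / 2 := by
        rw [← abs_mul, ← abs_mul, mul_add, mul_sub, mul_one]

theorem isTwoUniformlyConvex_real (hp1 : 1 ≤ p) (hp2 : p ≤ 2) :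
    IsTwoUniformlyConvex p ((p - 1) / 2) ℝ := by
  intro x y
  simp only [Real.norm_eq_abs, sq_abs]
  rcases le_total |y| |x| with h | h
  · exact sq_add_mul_sq_rpow_le_of_abs_le hp1 hp2 h
  -- As `δ = (p - 1) / 2 ≤ 1`, exchanging `x` and `y` only improves the inequality.
  have hswap : x ^ 2 + (p - 1) / 2 * y ^ 2 ≤ y ^ 2 + (p - 1) / 2 * x ^ 2 := by
    nlinarith [sq_le_sq.2 h]
  calc (x ^ 2 + (p - 1) / 2 * y ^ 2) ^ (p / 2)
      ≤ (y ^ 2 + (p - 1) / 2 * x ^ 2) ^ (p / 2) :=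
        Real.rpow_le_rpow
          (add_nonneg (sq_nonneg x) (mul_nonneg (by linarith) (sq_nonneg y))) hswap (by linarith)
    _ ≤ (|y + x| ^ p + |y - x| ^ p) / 2 := sq_add_mul_sq_rpow_le_of_abs_le hp1 hp2 h
    _ = (|x + y| ^ p + |x - y| ^ p) / 2 := by rw [add_comm y, abs_sub_comm y]

end RealLine

section SequenceSpaces

lemma rpow_add_rpow_rpow_le_of_hasSum {ι : Type*} {q : ℝ} (hq : 1 ≤ q) {a b c : ι → ℝ}
    {A B C : ℝ} (ha : ∀ i, 0 ≤ a i) (hb : ∀ i, 0 ≤ b i) (hA : HasSum a A) (hB : HasSum b B)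
    (hC : HasSum c C) (h : ∀ i, (a i ^ q + b i ^ q) ^ (1 / q) ≤ c i) :
    (A ^ q + B ^ q) ^ (1 / q) ≤ C := by
  -- This is the triangle inequality for series in the plane with the `ℓ_q` norm.
  have hq0 : 0 ≤ q := by linarith
  let Q := ENNReal.ofReal q
  have : Fact (1 ≤ Q) := ⟨ENNReal.one_le_ofReal.2 hq⟩
  have hnorm {s t : ℝ} (hs : 0 ≤ s) (ht : 0 ≤ t) :
      ‖WithLp.toLp Q (s, t)‖ = (s ^ q + t ^ q) ^ (1 / q) := by
    rw [WithLp.prod_norm_eq_add (by rw [ENNReal.toReal_ofReal hq0]; linarith),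
      ENNReal.toReal_ofReal hq0]
    simp [abs_of_nonneg hs, abs_of_nonneg ht]
  have hsum : HasSum (fun i => WithLp.toLp Q (a i, b i)) (WithLp.toLp Q (A, B)) :=
    (hA.prodMk hB).map (WithLp.prodContinuousLinearEquiv Q ℝ ℝ ℝ).symm
      (WithLp.prod_continuous_toLp Q ℝ ℝ)
  rw [← hnorm (hA.nonneg ha) (hB.nonneg hb)]
  exact hsum.norm_le_of_bounded hC fun i => (hnorm (ha i) (hb i)).trans_le (h i)

theorem isTwoUniformlyConvex_lp {ι : Type*} {E : ι → Type*} [∀ i, NormedAddCommGroup (E i)]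
    {P : ENNReal} [Fact (1 ≤ P)] {δ : ℝ} (hP : P ≤ 2) (hδ : 0 ≤ δ)
    (hE : ∀ i, IsTwoUniformlyConvex P.toReal δ (E i)) :
    IsTwoUniformlyConvex P.toReal δ (lp E P) := by
  intro x y
  have hp0 : 0 < P.toReal := ENNReal.toReal_pos (zero_lt_one.trans_le Fact.out).ne'
    (ne_top_of_le_ne_top ENNReal.ofNat_ne_top hP)
  have hp2 : P.toReal ≤ 2 := by simpa using ENNReal.toReal_mono ENNReal.ofNat_ne_top hP
  set p := P.toReal
  have hpow {t : ℝ} (ht : 0 ≤ t) : (t ^ (p / 2)) ^ (2 / p) = t := by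
    rw [← Real.rpow_mul ht, div_mul_div_cancel₀ two_ne_zero, div_self hp0.ne', Real.rpow_one]
  have hsum (z : lp E P) : HasSum (fun i => (‖z i‖ ^ 2) ^ (p / 2)) ((‖z‖ ^ 2) ^ (p / 2)) := by
    simpa only [sq_rpow_half (norm_nonneg _)] using lp.hasSum_norm hp0 z
  have hsumδ : HasSum (fun i => (δ * ‖y i‖ ^ 2) ^ (p / 2)) ((δ * ‖y‖ ^ 2) ^ (p / 2)) := by
    simpa only [Real.mul_rpow hδ (sq_nonneg _)] using (hsum y).mul_left (δ ^ (p / 2))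
  have h := rpow_add_rpow_rpow_le_of_hasSum ((one_le_div hp0).2 hp2)
    (fun i => by positivity) (fun i => by positivity) (hsum x) hsumδ
    (((lp.hasSum_norm hp0 (x + y)).add (lp.hasSum_norm hp0 (x - y))).div_const 2) fun i => by
      rw [hpow (by positivity), hpow (by positivity), one_div_div]
      exact hE i (x i) (y i)
  rwa [hpow (by positivity), hpow (by positivity), one_div_div] at h

lemma IsTwoUniformlyConvex.lp_two {ι E : Type*} [NormedAddCommGroup E] {δ : ℝ} (hδ : 0 ≤ δ)
    (hE : IsTwoUniformlyConvex 2 δ E) : IsTwoUniformlyConvex 2 δ (lp (fun _ : ι => E) 2) := by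
  have h := isTwoUniformlyConvex_lp (E := fun _ : ι => E) (le_refl 2) hδ
  rw [ENNReal.toReal_ofNat] at h
  exact h fun _ => hE

theorem IsTwoUniformlyConvex.mono_exponent {E : Type*} [NormedAddCommGroup E] {p q δ : ℝ}
    (hp : 0 < p) (hpq : p ≤ q) (hδ : 0 ≤ δ) (hE : IsTwoUniformlyConvex p δ E) :
    IsTwoUniformlyConvex q δ E := by
  intro x y
  have hpow {t : ℝ} (ht : 0 ≤ t) (s : ℝ) : (t ^ (p / s)) ^ (q / p) = t ^ (q / s) := by
    rw [← Real.rpow_mul ht]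
    congr 1
    field_simp
  have hconv := (convexOn_rpow ((one_le_div hp).2 hpq)).2
    (Set.mem_Ici.2 (Real.rpow_nonneg (norm_nonneg (x + y)) p))
    (Set.mem_Ici.2 (Real.rpow_nonneg (norm_nonneg (x - y)) p))
    one_half_pos.le one_half_pos.le (add_halves 1)
  have hpow_one {t : ℝ} (ht : 0 ≤ t) : (t ^ p) ^ (q / p) = t ^ q := by
    simpa only [div_one] using hpow ht 1
  simp only [smul_eq_mul, hpow_one (norm_nonneg _)] at hconv
  calc (‖x‖ ^ 2 + δ * ‖y‖ ^ 2) ^ (q / 2)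
      = ((‖x‖ ^ 2 + δ * ‖y‖ ^ 2) ^ (p / 2)) ^ (q / p) := (hpow (by positivity) 2).symm
    _ ≤ ((‖x + y‖ ^ p + ‖x - y‖ ^ p) / 2) ^ (q / p) :=
        Real.rpow_le_rpow (by positivity) (hE x y) (div_nonneg (hp.le.trans hpq) hp.le)
    _ = (1 / 2 * ‖x + y‖ ^ p + 1 / 2 * ‖x - y‖ ^ p) ^ (q / p) := by ring_nf
    _ ≤ 1 / 2 * ‖x + y‖ ^ q + 1 / 2 * ‖x - y‖ ^ q := hconv
    _ = (‖x + y‖ ^ q + ‖x - y‖ ^ q) / 2 := by ring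

theorem isTwoUniformlyConvex_lp_real {ι : Type*} {p : ℝ} (hp1 : 1 ≤ p) (hp2 : p ≤ 2)
    [Fact (1 ≤ ENNReal.ofReal p)] :
    IsTwoUniformlyConvex 2 ((p - 1) / 2) (lp (fun _ : ι => ℝ) (ENNReal.ofReal p)) := by
  have hp : (ENNReal.ofReal p).toReal = p := ENNReal.toReal_ofReal (by linarith)
  have hδ : 0 ≤ (p - 1) / 2 := by linarith
  have h := isTwoUniformlyConvex_lp (E := fun _ : ι => ℝ)
    (ENNReal.ofReal_le_ofNat.2 hp2) hδ fun _ => hp.symm ▸ isTwoUniformlyConvex_real hp1 hp2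
  rw [hp] at h
  exact h.mono_exponent (by linarith) hp2 hδ

end SequenceSpaces

section GeometricRecursion

variable {θ : ℝ} {x y : ℕ → ℝ}

lemma sum_range_le_of_succ_le (hx : ∀ k, 0 ≤ x k)
    (h : ∀ k, x (k + 1) ≤ θ * x k + y k) (n : ℕ) :
    (1 - θ) * ∑ k ∈ Finset.range n, x k ≤ x 0 + ∑ k ∈ Finset.range n, y k := by
  suffices hn : (1 - θ) * ∑ k ∈ Finset.range n, x k + x n ≤ x 0 + ∑ k ∈ Finset.range n, y k by
    linarith [hx n]
  induction n with
  | zero => simp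
  | succ n ih =>
    rw [Finset.sum_range_succ, Finset.sum_range_succ]
    linarith [h n]

lemma sum_range_le_of_le_succ (hθ : 0 ≤ θ) (hx : ∀ k, 0 ≤ x k)
    (h : ∀ k, x k ≤ θ * x (k + 1) + y k) (n : ℕ) :
    (1 - θ) * ∑ k ∈ Finset.range n, x k ≤ θ * x n + ∑ k ∈ Finset.range n, y k := by
  suffices hn : (1 - θ) * ∑ k ∈ Finset.range n, x k + θ * x 0
      ≤ θ * x n + ∑ k ∈ Finset.range n, y k by
    linarith [mul_nonneg hθ (hx 0)]
  induction n with
  | zero => simp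
  | succ n ih =>
    rw [Finset.sum_range_succ, Finset.sum_range_succ]
    linarith [h n]

lemma add_sq_le_three_halves_mul_sq_add (a b : ℝ) :
    (a + b) ^ 2 ≤ 3 / 2 * a ^ 2 + 3 * b ^ 2 := by
  linarith [sq_nonneg (a - 2 * b)]

end GeometricRecursion

section DyadicAverages

variable {E : Type*} [NormedAddCommGroup E] [NormedSpace ℝ E] (T : Module.End ℝ E)

/-- The ergodic average `2⁻ᵏ ∑ Tʲ` over `0 ≤ j < 2ᵏ`. -/
noncomputable def dyadicAvg (k : ℕ) : Module.End ℝ E :=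
  ((2 : ℝ) ^ k)⁻¹ • ∑ j ∈ Finset.range (2 ^ k), T ^ j

/-- The difference of the averages over the two consecutive time intervals `[0, 2ᵏ)` and
`[2ᵏ, 2ᵏ⁺¹)`, playing the role of the `k`-th Littlewood–Paley block. -/
noncomputable def dyadicDiff (k : ℕ) : Module.End ℝ E :=
  dyadicAvg T k - T ^ 2 ^ k * dyadicAvg T k

lemma dyadicAvg_zero : dyadicAvg T 0 = 1 := by
  simp [dyadicAvg]

lemma dyadicAvg_succ (k : ℕ) (v : E) :
    dyadicAvg T (k + 1) v = (1 / 2 : ℝ) • (dyadicAvg T k v + (T ^ 2 ^ k) (dyadicAvg T k v)) := by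
  have hsum : ∑ j ∈ Finset.range (2 ^ (k + 1)), T ^ j
      = ∑ j ∈ Finset.range (2 ^ k), T ^ j + T ^ 2 ^ k * ∑ j ∈ Finset.range (2 ^ k), T ^ j := by
    simp only [pow_succ 2 k, mul_two, Finset.sum_range_add, pow_add, Finset.mul_sum]
  simp only [dyadicAvg, hsum, LinearMap.smul_apply, LinearMap.add_apply, Module.End.mul_apply,
    map_smul, ← smul_add, smul_smul]
  congr 1
  rw [pow_succ, mul_inv, mul_comm, one_div]

lemma dyadicDiff_apply (k : ℕ) (v : E) :
    dyadicDiff T k v = dyadicAvg T k v - (T ^ 2 ^ k) (dyadicAvg T k v) :=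
  rfl

lemma dyadicAvg_succ_eq_sub (k : ℕ) (v : E) :
    dyadicAvg T (k + 1) v = dyadicAvg T k v - (1 / 2 : ℝ) • dyadicDiff T k v := by
  rw [dyadicAvg_succ, dyadicDiff_apply]
  module

-- With `P = T ^ 2 ^ k` this is `(1 + P) ^ 2 / 2 = 2 - (3 + P) * (1 - P) / 2`, halved.
lemma dyadicDiff_eq_half_smul_succ_add (k : ℕ) (v : E) :
    dyadicDiff T k v = (1 / 2 : ℝ) • dyadicDiff T (k + 1) v
      + ((3 / 4 : ℝ) • (dyadicDiff T k v - (T ^ 2 ^ k) (dyadicDiff T k v))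
        + (1 / 4 : ℝ) • (T ^ 2 ^ k) (dyadicDiff T k v - (T ^ 2 ^ k) (dyadicDiff T k v))) := by
  have hsq (w : E) : (T ^ 2 ^ (k + 1)) w = (T ^ 2 ^ k) ((T ^ 2 ^ k) w) := by
    rw [pow_succ 2, mul_two, pow_add, Module.End.mul_apply]
  simp only [dyadicDiff_apply, dyadicAvg_succ, hsq, map_sub, map_add, map_smul]
  module

lemma sum_norm_sub_dyadicAvg_sq_div_le (n : ℕ) (v : E) :
    ∑ k ∈ Finset.range n, ‖v - dyadicAvg T k v‖ ^ 2 / 2 ^ k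
      ≤ 3 / 2 * ∑ k ∈ Finset.range n, ‖dyadicDiff T k v‖ ^ 2 / 2 ^ k := by
  have hrec (k : ℕ) : ‖v - dyadicAvg T (k + 1) v‖ ^ 2 / 2 ^ (k + 1)
      ≤ 3 / 4 * (‖v - dyadicAvg T k v‖ ^ 2 / 2 ^ k)
        + 3 / 8 * (‖dyadicDiff T k v‖ ^ 2 / 2 ^ k) := by
    have hnorm : ‖v - dyadicAvg T (k + 1) v‖
        ≤ ‖v - dyadicAvg T k v‖ + 1 / 2 * ‖dyadicDiff T k v‖ := by
      rw [dyadicAvg_succ_eq_sub, sub_sub_eq_add_sub, add_sub_right_comm]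
      refine (norm_add_le _ _).trans_eq ?_
      rw [norm_smul, Real.norm_of_nonneg one_half_pos.le]
    calc ‖v - dyadicAvg T (k + 1) v‖ ^ 2 / 2 ^ (k + 1)
        ≤ (3 / 2 * ‖v - dyadicAvg T k v‖ ^ 2 + 3 * (1 / 2 * ‖dyadicDiff T k v‖) ^ 2)
            / 2 ^ (k + 1) := by
          gcongr
          exact (pow_le_pow_left₀ (norm_nonneg _) hnorm 2).trans
            (add_sq_le_three_halves_mul_sq_add _ _)
      _ = _ := by ring
  have h := sum_range_le_of_succ_le (x := fun k => ‖v - dyadicAvg T k v‖ ^ 2 / 2 ^ k)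
    (fun k => by positivity) hrec n
  rw [← Finset.mul_sum, dyadicAvg_zero, Module.End.one_apply, sub_self, norm_zero] at h
  linarith

variable {T}

lemma commute_dyadicAvg {S : Module.End ℝ E} (h : Commute S T) (k : ℕ) :
    Commute S (dyadicAvg T k) :=
  (Commute.sum_right _ _ _ fun j _ => h.pow_right j).smul_right _

lemma commute_dyadicDiff {S : Module.End ℝ E} (h : Commute S T) (k : ℕ) :
    Commute S (dyadicDiff T k) :=
  (commute_dyadicAvg h k).sub_right ((h.pow_right _).mul_right (commute_dyadicAvg h k))

lemma dyadicDiff_eq_dyadicAvg (k : ℕ) (v : E) :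
    dyadicDiff T k v = dyadicAvg T k (v - (T ^ 2 ^ k) v) := by
  rw [dyadicDiff_apply, map_sub, ← Module.End.mul_apply, ← Module.End.mul_apply,
    commute_dyadicAvg ((Commute.refl T).pow_left _) k]

variable (hT : ∀ v, ‖T v‖ ≤ ‖v‖)
include hT

lemma norm_pow_apply_le (n : ℕ) (v : E) : ‖(T ^ n) v‖ ≤ ‖v‖ := by
  induction n with
  | zero => rfl
  | succ n ih =>
    rw [pow_succ', Module.End.mul_apply]
    exact (hT _).trans ih

lemma norm_dyadicAvg_le (k : ℕ) (v : E) : ‖dyadicAvg T k v‖ ≤ ‖v‖ := by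
  induction k with
  | zero => rw [dyadicAvg_zero, Module.End.one_apply]
  | succ k ih =>
    rw [dyadicAvg_succ, norm_smul, Real.norm_of_nonneg one_half_pos.le]
    linarith [norm_add_le (dyadicAvg T k v) ((T ^ 2 ^ k) (dyadicAvg T k v)),
      norm_pow_apply_le hT (2 ^ k) (dyadicAvg T k v)]

lemma norm_dyadicDiff_le (k : ℕ) (v : E) :
    ‖dyadicDiff T k v‖ ≤ 1 / 2 * ‖dyadicDiff T (k + 1) v‖
      + ‖dyadicDiff T k v - (T ^ 2 ^ k) (dyadicDiff T k v)‖ := by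
  set w := dyadicDiff T k v - (T ^ 2 ^ k) (dyadicDiff T k v) with hw
  calc ‖dyadicDiff T k v‖
      = ‖(1 / 2 : ℝ) • dyadicDiff T (k + 1) v
          + ((3 / 4 : ℝ) • w + (1 / 4 : ℝ) • (T ^ 2 ^ k) w)‖ := by
        rw [hw, ← dyadicDiff_eq_half_smul_succ_add]
    _ ≤ 1 / 2 * ‖dyadicDiff T (k + 1) v‖ + (3 / 4 * ‖w‖ + 1 / 4 * ‖(T ^ 2 ^ k) w‖) := by
        refine norm_add_le_of_le ?_ (norm_add_le_of_le ?_ ?_) <;>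
          rw [norm_smul, Real.norm_of_nonneg (by norm_num)]
    _ ≤ _ := by linarith [norm_pow_apply_le hT (2 ^ k) w]

theorem sum_norm_dyadicDiff_sq_le {δ : ℝ} (hE : IsTwoUniformlyConvex 2 δ E) (n : ℕ) (v : E) :
    δ * ∑ k ∈ Finset.range n, ‖dyadicDiff T k v‖ ^ 2 ≤ 4 * ‖v‖ ^ 2 := by
  -- Uniform convexity makes `‖dyadicAvg T k v‖ ^ 2` drop by `δ / 4 * ‖dyadicDiff T k v‖ ^ 2`.
  have hdrop (k : ℕ) : ‖dyadicAvg T (k + 1) v‖ ^ 2 + δ / 4 * ‖dyadicDiff T k v‖ ^ 2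
      ≤ ‖dyadicAvg T k v‖ ^ 2 := by
    set u := dyadicAvg T k v
    set w := (T ^ 2 ^ k) u
    have hadd : (1 / 2 : ℝ) • (u + w) + (1 / 2 : ℝ) • (u - w) = u := by module
    have hsub : (1 / 2 : ℝ) • (u + w) - (1 / 2 : ℝ) • (u - w) = w := by module
    have hconv := hE ((1 / 2 : ℝ) • (u + w)) ((1 / 2 : ℝ) • (u - w))
    rw [hadd, hsub, div_self two_ne_zero, Real.rpow_one, Real.rpow_two, Real.rpow_two,
      norm_smul _ (u - w), Real.norm_of_nonneg one_half_pos.le] at hconv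
    have hw : ‖w‖ ^ 2 ≤ ‖u‖ ^ 2 := by
      gcongr
      exact norm_pow_apply_le hT _ u
    rw [dyadicAvg_succ, dyadicDiff_apply]
    linarith
  suffices h : δ * ∑ k ∈ Finset.range n, ‖dyadicDiff T k v‖ ^ 2
      ≤ 4 * ‖v‖ ^ 2 - 4 * ‖dyadicAvg T n v‖ ^ 2 by
    linarith [sq_nonneg ‖dyadicAvg T n v‖]
  induction n with
  | zero => simp [dyadicAvg_zero]
  | succ n ih =>
    rw [Finset.sum_range_succ]
    linarith [hdrop n]

lemma sum_norm_dyadicDiff_sq_div_le (n : ℕ) (v : E) :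
    ∑ k ∈ Finset.range n, ‖dyadicDiff T k v‖ ^ 2 / 2 ^ k
      ≤ 3 * (‖dyadicDiff T n v‖ ^ 2 / 2 ^ n) + 12 * ∑ k ∈ Finset.range n,
        ‖dyadicDiff T k v - (T ^ 2 ^ k) (dyadicDiff T k v)‖ ^ 2 / 2 ^ k := by
  have hrec (k : ℕ) : ‖dyadicDiff T k v‖ ^ 2 / 2 ^ k
      ≤ 3 / 4 * (‖dyadicDiff T (k + 1) v‖ ^ 2 / 2 ^ (k + 1))
        + 3 * (‖dyadicDiff T k v - (T ^ 2 ^ k) (dyadicDiff T k v)‖ ^ 2 / 2 ^ k) := by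
    set s := ‖dyadicDiff T k v - (T ^ 2 ^ k) (dyadicDiff T k v)‖
    calc ‖dyadicDiff T k v‖ ^ 2 / 2 ^ k
        ≤ (3 / 2 * (1 / 2 * ‖dyadicDiff T (k + 1) v‖) ^ 2 + 3 * s ^ 2) / 2 ^ k := by
          gcongr
          exact (pow_le_pow_left₀ (norm_nonneg _) (norm_dyadicDiff_le hT k v) 2).trans
            (add_sq_le_three_halves_mul_sq_add _ _)
      _ = _ := by ring
  have h := sum_range_le_of_le_succ (by norm_num) (fun k => by positivity) hrec n
  rw [← Finset.mul_sum] at h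
  linarith

lemma sum_norm_sub_pow_sq_div_le (n : ℕ) (v : E) :
    ∑ k ∈ Finset.range n, ‖v - (T ^ 2 ^ k) v‖ ^ 2 / 2 ^ k
      ≤ 14 * ∑ k ∈ Finset.range n, ‖dyadicDiff T k v‖ ^ 2 / 2 ^ k := by
  have hterm (k : ℕ) : ‖v - (T ^ 2 ^ k) v‖ ^ 2 / 2 ^ k
      ≤ 2 * (‖dyadicDiff T k v‖ ^ 2 / 2 ^ k)
        + 8 * (‖v - dyadicAvg T k v‖ ^ 2 / 2 ^ k) := by
    set u := v - dyadicAvg T k v with hu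
    have hnorm : ‖v - (T ^ 2 ^ k) v‖ ≤ ‖dyadicDiff T k v‖ + 2 * ‖u‖ := by
      have hsplit : v - (T ^ 2 ^ k) v = dyadicDiff T k v + (u - (T ^ 2 ^ k) u) := by
        rw [hu, dyadicDiff_apply, map_sub]
        abel
      rw [hsplit]
      linarith [norm_add_le (dyadicDiff T k v) (u - (T ^ 2 ^ k) u),
        norm_sub_le u ((T ^ 2 ^ k) u), norm_pow_apply_le hT (2 ^ k) u]
    calc ‖v - (T ^ 2 ^ k) v‖ ^ 2 / 2 ^ k
        ≤ 2 * (‖dyadicDiff T k v‖ ^ 2 + (2 * ‖u‖) ^ 2) / 2 ^ k := by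
          gcongr
          exact (pow_le_pow_left₀ (norm_nonneg _) hnorm 2).trans add_sq_le
      _ = _ := by ring
  refine (Finset.sum_le_sum fun k _ => hterm k).trans ?_
  rw [Finset.sum_add_distrib, ← Finset.mul_sum, ← Finset.mul_sum]
  linarith [sum_norm_sub_dyadicAvg_sq_div_le T n v]

end DyadicAverages

section IsometricRepresentations

variable {G E : Type*} [Group G] [NormedAddCommGroup E] [NormedSpace ℝ E]
  {π : Representation ℝ G E} (hπ : ∀ g v, ‖π g v‖ = ‖v‖)
include hπ

lemma norm_sub_map_inv (g : G) (v : E) : ‖v - π g⁻¹ v‖ = ‖v - π g v‖ := by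
  rw [← hπ g (v - π g⁻¹ v), map_sub, π.self_inv_apply, norm_sub_rev]

lemma norm_sub_map_mul_le (g h : G) (v : E) :
    ‖v - π (g * h) v‖ ≤ ‖v - π g v‖ + ‖v - π h v‖ := by
  calc ‖v - π (g * h) v‖ = ‖(v - π g v) + π g (v - π h v)‖ := by
        rw [map_mul, Module.End.mul_apply, map_sub, sub_add_sub_cancel]
    _ ≤ ‖v - π g v‖ + ‖v - π h v‖ := (norm_add_le _ _).trans_eq (by rw [hπ])

lemma norm_sub_map_list_prod_le {v : E} {M : ℝ} (l : List G) (hl : ∀ s ∈ l, ‖v - π s v‖ ≤ M) :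
    ‖v - π l.prod v‖ ≤ l.length * M := by
  induction l with
  | nil => simp
  | cons s l ih =>
    rw [List.forall_mem_cons] at hl
    rw [List.prod_cons, List.length_cons, Nat.cast_succ]
    linarith [norm_sub_map_mul_le hπ s l.prod v, hl.1, ih hl.2]

end IsometricRepresentations

section RegularRepresentation

variable {G ι X : Type*} [Group G] [NormedAddCommGroup X]

lemma hasSum_norm_sq_lp_two (u : lp (fun _ : ι => X) 2) :
    HasSum (fun i => ‖u i‖ ^ 2) (‖u‖ ^ 2) := by
  simpa using lp.hasSum_norm (by norm_num) u

lemma norm_sq_lp_two_le_ncard_mul {s : Set ι} (hs : s.Finite) {b : ℝ}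
    {u : lp (fun _ : ι => X) 2} (hu : ∀ i ∉ s, u i = 0) (hb : ∀ i, ‖u i‖ ^ 2 ≤ b) :
    ‖u‖ ^ 2 ≤ s.ncard * b := by
  have hsum : ‖u‖ ^ 2 = ∑ i ∈ hs.toFinset, ‖u i‖ ^ 2 :=
    (hasSum_norm_sq_lp_two u).unique <| hasSum_sum_of_ne_finset_zero fun i hi => by
      simp [hu i (by simpa using hi)]
  rw [hsum, Set.ncard_eq_toFinset_card s hs, ← nsmul_eq_mul]
  exact Finset.sum_le_card_nsmul _ _ _ fun i _ => hb i

lemma ncard_mul_le_norm_sq_lp_two {s : Set ι} (hs : s.Finite) {b : ℝ}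
    {u : lp (fun _ : ι => X) 2} (hb : ∀ i ∈ s, b ≤ ‖u i‖ ^ 2) :
    s.ncard * b ≤ ‖u‖ ^ 2 := by
  rw [Set.ncard_eq_toFinset_card s hs, ← nsmul_eq_mul]
  exact (Finset.card_nsmul_le_sum _ _ _ fun i hi => hb i (by simpa using hi)).trans
    (sum_le_hasSum _ (fun _ _ => by positivity) (hasSum_norm_sq_lp_two u))

lemma hasSum_norm_sq_comp_mul_right (u : lp (fun _ : G => X) 2) (g : G) :
    HasSum (fun x => ‖u (x * g)‖ ^ 2) (‖u‖ ^ 2) :=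
  ((Equiv.mulRight g).hasSum_iff (f := fun x => ‖u x‖ ^ 2)).2 (hasSum_norm_sq_lp_two u)

variable (G X) [NormedSpace ℝ X]

/-- The right regular representation of `G` on `ℓ₂(G; X)`. -/
noncomputable def rightRegular : Representation ℝ G (lp (fun _ : G => X) 2) where
  toFun g :=
    { toFun := fun u => ⟨fun x => u (x * g),
        memℓp_gen <| by simpa using (hasSum_norm_sq_comp_mul_right u g).summable⟩
      map_add' := fun _ _ => rfl
      map_smul' := fun _ _ => rfl }
  map_one' := LinearMap.ext fun u => lp.ext <| funext fun x => congrArg u (mul_one x)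
  map_mul' g h := LinearMap.ext fun u => lp.ext <| funext fun x =>
    congrArg u (mul_assoc x g h).symm

variable {G X}

lemma rightRegular_apply (g : G) (u : lp (fun _ : G => X) 2) (x : G) :
    rightRegular G X g u x = u (x * g) :=
  rfl

lemma norm_rightRegular (g : G) (u : lp (fun _ : G => X) 2) : ‖rightRegular G X g u‖ = ‖u‖ :=
  (sq_eq_sq₀ (norm_nonneg _) (norm_nonneg _)).1 <|
    (hasSum_norm_sq_lp_two (rightRegular G X g u)).unique (hasSum_norm_sq_comp_mul_right u g)

end RegularRepresentation

namespace DH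

section Coordinates

@[simp] lemma mul_x (g h : DH) : (g * h).x = g.x + h.x := rfl
@[simp] lemma mul_y (g h : DH) : (g * h).y = g.y + h.y := rfl
@[simp] lemma mul_z (g h : DH) : (g * h).z = g.z + h.z + g.x * h.y := rfl
@[simp] lemma inv_x (g : DH) : g⁻¹.x = -g.x := rfl
@[simp] lemma inv_y (g : DH) : g⁻¹.y = -g.y := rfl
@[simp] lemma inv_z (g : DH) : g⁻¹.z = -g.z + g.x * g.y := rfl
@[simp] lemma one_x : (1 : DH).x = 0 := rfl
@[simp] lemma one_y : (1 : DH).y = 0 := rfl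
@[simp] lemma one_z : (1 : DH).z = 0 := rfl

lemma zpow_of_x_mul_y_eq_zero {g : DH} (hg : g.x * g.y = 0) (n : ℤ) :
    g ^ n = ⟨n * g.x, n * g.y, n * g.z⟩ := by
  induction n using Int.induction_on with
  | zero => ext <;> simp
  | succ n ih =>
    rw [zpow_add_one, ih]
    ext <;> simp only [mul_x, mul_y, mul_z]
    · ring
    · ring
    · linear_combination (n : ℤ) * hg
  | pred n ih =>
    rw [zpow_sub_one, ih]
    ext <;> simp only [mul_x, mul_y, mul_z, inv_x, inv_y, inv_z]
    · ring
    · ring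
    · linear_combination (n + 1 : ℤ) * hg

lemma gA_zpow (n : ℤ) : gA ^ n = ⟨n, 0, 0⟩ := by
  simp [zpow_of_x_mul_y_eq_zero, gA]

lemma gB_zpow (n : ℤ) : gB ^ n = ⟨0, n, 0⟩ := by
  simp [zpow_of_x_mul_y_eq_zero, gB]

lemma gC_zpow (n : ℤ) : gC ^ n = ⟨0, 0, n⟩ := by
  simp [zpow_of_x_mul_y_eq_zero, gA, gB, gC]

lemma eq_gB_zpow_mul_gA_zpow_mul_gC_zpow (g : DH) : g = gB ^ g.y * gA ^ g.x * gC ^ g.z := by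
  rw [gA_zpow, gB_zpow, gC_zpow]
  ext <;> simp

lemma gC_zpow_mul (s t : ℤ) : gC ^ (s * t) = gA ^ s * gB ^ t * (gA ^ s)⁻¹ * (gB ^ t)⁻¹ := by
  rw [gC_zpow, gA_zpow, gB_zpow]
  ext <;> simp

lemma commute_gC (g : DH) : Commute g gC := by
  ext <;> simp [gA, gB, gC, add_comm]

end Coordinates

section WordLength

/-- The symmetric generating set `{a, b, a⁻¹, b⁻¹}` of the word metric. -/
def gens : Set DH := {gA, gB, gA⁻¹, gB⁻¹}

lemma gA_mem_gens : gA ∈ gens := by simp [gens]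

lemma gB_mem_gens : gB ∈ gens := by simp [gens]

lemma inv_mem_gens {s : DH} (hs : s ∈ gens) : s⁻¹ ∈ gens := by
  simp only [gens, Set.mem_insert_iff, Set.mem_singleton_iff] at hs ⊢
  rcases hs with rfl | rfl | rfl | rfl <;> simp

lemma closure_gens : Subgroup.closure gens = ⊤ := by
  refine (Subgroup.eq_top_iff' _).2 fun g => ?_
  have hA : gA ∈ Subgroup.closure gens := Subgroup.subset_closure gA_mem_gens
  have hB : gB ∈ Subgroup.closure gens := Subgroup.subset_closure gB_mem_gens
  have hC : gC ∈ Subgroup.closure gens :=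
    mul_mem (mul_mem (mul_mem hA hB) (inv_mem hA)) (inv_mem hB)
  rw [eq_gB_zpow_mul_gA_zpow_mul_gC_zpow g]
  exact mul_mem (mul_mem (zpow_mem hB _) (zpow_mem hA _)) (zpow_mem hC _)

lemma wordLen_prod_le {l : List DH} (hl : ∀ s ∈ l, s ∈ gens) : wordLen l.prod ≤ l.length :=
  Nat.sInf_le ⟨l, rfl, hl, rfl⟩

lemma exists_list_length_eq_wordLen (g : DH) :
    ∃ l : List DH, l.length = wordLen g ∧ (∀ s ∈ l, s ∈ gens) ∧ l.prod = g := by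
  refine Nat.sInf_mem
    (s := {n | ∃ l : List DH, l.length = n ∧ (∀ s ∈ l, s ∈ gens) ∧ l.prod = g}) ?_
  have hg : g ∈ (Subgroup.closure gens).toSubmonoid := closure_gens ▸ Subgroup.mem_top g
  rw [Subgroup.closure_toSubmonoid] at hg
  obtain ⟨l, hl, hprod⟩ := Submonoid.exists_list_of_mem_closure hg
  exact ⟨l.length, l, rfl,
    fun s hs => (hl s hs).elim id fun h => inv_inv s ▸ inv_mem_gens h, hprod⟩

lemma wordLen_one : wordLen 1 = 0 :=
  Nat.le_zero.1 (wordLen_prod_le (l := []) (List.forall_mem_nil _))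

lemma wordLen_le_one {s : DH} (hs : s ∈ gens) : wordLen s ≤ 1 := by
  simpa using wordLen_prod_le (l := [s]) (by simpa using hs)

lemma wordLen_mul_le (g h : DH) : wordLen (g * h) ≤ wordLen g + wordLen h := by
  obtain ⟨l, hl, hlgens, rfl⟩ := exists_list_length_eq_wordLen g
  obtain ⟨m, hm, hmgens, rfl⟩ := exists_list_length_eq_wordLen h
  rw [← hl, ← hm, ← List.prod_append, ← List.length_append]
  exact wordLen_prod_le (List.forall_mem_append.2 ⟨hlgens, hmgens⟩)

lemma wordLen_inv_le (g : DH) : wordLen g⁻¹ ≤ wordLen g := by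
  obtain ⟨l, hl, hlgens, rfl⟩ := exists_list_length_eq_wordLen g
  rw [← hl, List.prod_inv_reverse]
  refine (wordLen_prod_le fun s hs => ?_).trans_eq (by simp)
  obtain ⟨t, ht, rfl⟩ := List.mem_map.1 (List.mem_reverse.1 hs)
  exact inv_mem_gens (hlgens t ht)

lemma wordLen_inv (g : DH) : wordLen g⁻¹ = wordLen g :=
  (wordLen_inv_le g).antisymm (by simpa using wordLen_inv_le g⁻¹)

lemma wordLen_le_wordLen_mul_add (g h : DH) : wordLen g ≤ wordLen (g * h) + wordLen h := by
  simpa [wordLen_inv] using wordLen_mul_le (g * h) h⁻¹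

lemma wordLen_zpow (g : DH) (n : ℤ) : wordLen (g ^ n) = wordLen (g ^ n.natAbs) := by
  rcases n.natAbs_eq with h | h
  · rw [h, zpow_natCast, Int.natAbs_natCast]
  · rw [h, zpow_neg, zpow_natCast, wordLen_inv, Int.natAbs_neg, Int.natAbs_natCast]

lemma wordLen_pow_le {s : DH} (hs : s ∈ gens) (n : ℕ) : wordLen (s ^ n) ≤ n := by
  induction n with
  | zero => rw [pow_zero, wordLen_one]
  | succ n ih =>
    rw [pow_succ]
    exact (wordLen_mul_le _ _).trans (add_le_add ih (wordLen_le_one hs))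

lemma wordLen_gC_pow_mul_le (s t : ℕ) : wordLen (gC ^ (s * t)) ≤ 2 * (s + t) := by
  have hcomm : gC ^ (s * t) = gA ^ s * gB ^ t * (gA ^ s)⁻¹ * (gB ^ t)⁻¹ :=
    mod_cast gC_zpow_mul s t
  calc wordLen (gC ^ (s * t))
      ≤ wordLen (gA ^ s) + wordLen (gB ^ t) + wordLen (gA ^ s)⁻¹ + wordLen (gB ^ t)⁻¹ := by
        rw [hcomm]
        refine (wordLen_mul_le _ _).trans (add_le_add_left ?_ _)
        refine (wordLen_mul_le _ _).trans (add_le_add_left ?_ _)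
        exact wordLen_mul_le _ _
    _ ≤ s + t + s + t := by
        rw [wordLen_inv, wordLen_inv]
        gcongr <;> first | exact wordLen_pow_le gA_mem_gens s | exact wordLen_pow_le gB_mem_gens t
    _ = 2 * (s + t) := by ring

-- Write `m = s ^ 2 + t` with `s = ⌊√m⌋`, so that `t ≤ 2 * s`.
lemma wordLen_gC_pow_le (m : ℕ) : wordLen (gC ^ m) ≤ 10 * m.sqrt := by
  rcases m.eq_zero_or_pos with rfl | hm
  · simp [wordLen_one]
  have hs : 0 < m.sqrt := Nat.sqrt_pos.2 hm
  obtain ⟨t, ht⟩ := Nat.exists_eq_add_of_le m.sqrt_le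
  have ht2 : t ≤ 2 * m.sqrt := by linarith [m.sqrt_le_add]
  have hsplit : gC ^ m = gC ^ (m.sqrt * m.sqrt) * gC ^ (1 * t) := by
    rw [← pow_add, one_mul, ← ht]
  rw [hsplit]
  linarith [wordLen_mul_le (gC ^ (m.sqrt * m.sqrt)) (gC ^ (1 * t)),
    wordLen_gC_pow_mul_le m.sqrt m.sqrt, wordLen_gC_pow_mul_le 1 t]

lemma wordLen_le (g : DH) :
    wordLen g ≤ g.x.natAbs + g.y.natAbs + 10 * g.z.natAbs.sqrt := by
  have hA : wordLen (gA ^ g.x) ≤ g.x.natAbs :=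
    (wordLen_zpow _ _).trans_le (wordLen_pow_le gA_mem_gens _)
  have hB : wordLen (gB ^ g.y) ≤ g.y.natAbs :=
    (wordLen_zpow _ _).trans_le (wordLen_pow_le gB_mem_gens _)
  have hC : wordLen (gC ^ g.z) ≤ 10 * g.z.natAbs.sqrt :=
    (wordLen_zpow _ _).trans_le (wordLen_gC_pow_le _)
  calc wordLen g = wordLen (gB ^ g.y * gA ^ g.x * gC ^ g.z) := by
        rw [← eq_gB_zpow_mul_gA_zpow_mul_gC_zpow]
    _ ≤ wordLen (gB ^ g.y) + wordLen (gA ^ g.x) + wordLen (gC ^ g.z) :=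
        (wordLen_mul_le _ _).trans (add_le_add_left (wordLen_mul_le _ _) _)
    _ ≤ _ := by linarith

lemma abs_coord_le_wordLen (g : DH) :
    |g.x| ≤ wordLen g ∧ |g.y| ≤ wordLen g ∧ |g.z| ≤ (wordLen g : ℤ) ^ 2 := by
  obtain ⟨l, hl, hlgens, rfl⟩ := exists_list_length_eq_wordLen g
  rw [← hl]
  clear hl
  induction l with
  | nil => simp
  | cons s l ih =>
    obtain ⟨hs, hlgens⟩ := List.forall_mem_cons.1 hlgens
    obtain ⟨hx, hy, hz⟩ := ih hlgens
    rw [abs_le] at hx hy hz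
    simp only [gens, Set.mem_insert_iff, Set.mem_singleton_iff] at hs
    rw [List.prod_cons, List.length_cons, Nat.cast_succ, abs_le, abs_le, abs_le]
    -- Prepending a letter changes `z` by at most `|y|`, that is by at most the length so far.
    rcases hs with rfl | rfl | rfl | rfl <;>
      simp only [mul_x, mul_y, mul_z, inv_x, inv_y, inv_z, gA, gB] <;>
      refine ⟨⟨?_, ?_⟩, ⟨?_, ?_⟩, ⟨?_, ?_⟩⟩ <;> nlinarith

lemma le_wordLen_gC_pow_sq (m : ℕ) : m ≤ wordLen (gC ^ m) ^ 2 := by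
  have hz : (gC ^ m).z = m := congrArg DH.z (mod_cast gC_zpow m)
  have h := (abs_coord_le_wordLen (gC ^ m)).2.2
  rw [hz, Nat.abs_cast] at h
  exact_mod_cast h

end WordLength

section Balls

lemma dW_self_mul (x g : DH) : dW x (x * g) = wordLen g := by
  rw [dW, inv_mul_cancel_left]

lemma dW_one (x : DH) : dW x 1 = wordLen x := by
  rw [dW, mul_one, wordLen_inv]

lemma mem_Ball {n : ℕ} {g : DH} : g ∈ Ball n ↔ wordLen g ≤ n := by
  rw [← dW_one]
  rfl

/-- The coordinates of `ℍ`, as a bijection onto `ℤ³`. -/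
def equivProd : DH ≃ ℤ × ℤ × ℤ where
  toFun g := (g.x, g.y, g.z)
  invFun t := ⟨t.1, t.2.1, t.2.2⟩

lemma equivProd_mem_of_mem_Ball {n : ℕ} {g : DH} (hg : g ∈ Ball n) :
    equivProd g ∈ Finset.Icc (-(n : ℤ)) n ×ˢ Finset.Icc (-(n : ℤ)) n ×ˢ
      Finset.Icc (-(n : ℤ) ^ 2) (n ^ 2) := by
  obtain ⟨hx, hy, hz⟩ := abs_coord_le_wordLen g
  have hn : (wordLen g : ℤ) ≤ n := mod_cast mem_Ball.1 hg
  simp only [equivProd, Equiv.coe_fn_mk, Finset.mem_product, Finset.mem_Icc, ← abs_le]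
  exact ⟨hx.trans hn, hy.trans hn, hz.trans (by gcongr)⟩

lemma finite_Ball (n : ℕ) : (Ball n).Finite :=
  Set.Finite.of_injOn (fun _ => equivProd_mem_of_mem_Ball) equivProd.injective.injOn
    (Finset.finite_toSet _)

lemma ncard_Ball_le {n : ℕ} (hn : 1 ≤ n) : (Ball n).ncard ≤ 27 * n ^ 4 := by
  have hcard := Set.ncard_le_ncard_of_injOn equivProd
    (fun _ => equivProd_mem_of_mem_Ball (n := n)) equivProd.injective.injOn
    (Finset.finite_toSet _)
  have hside : ((n : ℤ) + 1 - -n).toNat ≤ 3 * n := by omega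
  have hheight : ((n : ℤ) ^ 2 + 1 - -(n : ℤ) ^ 2).toNat ≤ 3 * n ^ 2 := by
    have hn2 : (1 : ℤ) ≤ n ^ 2 := mod_cast Nat.one_le_pow 2 n hn
    rw [Int.toNat_le]
    push_cast
    linarith
  rw [Set.ncard_coe_finset, Finset.card_product, Finset.card_product, Int.card_Icc,
    Int.card_Icc] at hcard
  calc (Ball n).ncard ≤ 3 * n * (3 * n * (3 * n ^ 2)) := hcard.trans (by gcongr)
    _ = 27 * n ^ 4 := by ring

lemma pow_four_le_ncard_Ball (r : ℕ) : r ^ 4 ≤ (Ball (12 * r)).ncard := by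
  let S : Finset (ℤ × ℤ × ℤ) := Finset.Ico 0 ↑r ×ˢ Finset.Ico 0 ↑r ×ˢ Finset.Ico 0 ↑(r ^ 2)
  have hS : S.card = r ^ 4 := by
    simp only [S, Finset.card_product, Int.card_Ico, sub_zero, Int.toNat_natCast]
    ring
  rw [← hS, ← Set.ncard_coe_finset]
  refine Set.ncard_le_ncard_of_injOn equivProd.symm (fun t ht => ?_)
    equivProd.symm.injective.injOn (finite_Ball _)
  simp only [S, Finset.coe_product, Finset.coe_Ico, Set.mem_prod, Set.mem_Ico] at ht
  obtain ⟨hx, hy, hz⟩ := ht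
  have hz : t.2.2.natAbs.sqrt ≤ r :=
    (Nat.sqrt_le_sqrt (by omega)).trans_eq (Nat.sqrt_eq' r)
  have hlen := wordLen_le (equivProd.symm t)
  simp only [equivProd, Equiv.coe_fn_symm_mk] at hlen ⊢
  rw [mem_Ball]
  omega

end Balls

section Poincare

variable {E : Type*} [NormedAddCommGroup E] [NormedSpace ℝ E] {π : Representation ℝ DH E}

/-- The horizontal Dirichlet energy `‖∂ₐv‖² + ‖∂_b v‖²` of a vector `v` in a representation. -/
noncomputable def horizontalEnergy (π : Representation ℝ DH E) (v : E) : ℝ :=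
  ‖v - π gA v‖ ^ 2 + ‖v - π gB v‖ ^ 2

lemma horizontalEnergy_nonneg (v : E) : 0 ≤ horizontalEnergy π v := by
  unfold horizontalEnergy
  positivity

lemma horizontalEnergy_dyadicDiff (k : ℕ) (v : E) :
    horizontalEnergy π (dyadicDiff (π gC) k v)
      = ‖dyadicDiff (π gC) k (v - π gA v)‖ ^ 2 + ‖dyadicDiff (π gC) k (v - π gB v)‖ ^ 2 := by
  have hcomm (g : DH) : π g (dyadicDiff (π gC) k v) = dyadicDiff (π gC) k (π g v) :=
    LinearMap.congr_fun (commute_dyadicDiff ((commute_gC g).map π) k) v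
  rw [horizontalEnergy, hcomm, hcomm, map_sub, map_sub]

variable (hπ : ∀ g v, ‖π g v‖ = ‖v‖)
include hπ

lemma norm_sub_map_sq_le_wordLen (g : DH) (v : E) :
    ‖v - π g v‖ ^ 2 ≤ 2 * wordLen g ^ 2 * horizontalEnergy π v := by
  obtain ⟨l, hl, hlgens, rfl⟩ := exists_list_length_eq_wordLen g
  have hletter : ∀ s ∈ l, ‖v - π s v‖ ≤ ‖v - π gA v‖ + ‖v - π gB v‖ := by
    intro s hs
    have hs := hlgens s hs
    simp only [gens, Set.mem_insert_iff, Set.mem_singleton_iff] at hs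
    rcases hs with rfl | rfl | rfl | rfl <;> (try rw [norm_sub_map_inv hπ]) <;> simp
  calc ‖v - π l.prod v‖ ^ 2
      ≤ (l.length * (‖v - π gA v‖ + ‖v - π gB v‖)) ^ 2 := by
        gcongr
        exact norm_sub_map_list_prod_le hπ l hletter
    _ ≤ (l.length : ℝ) ^ 2 * (2 * horizontalEnergy π v) := by
        rw [mul_pow]
        gcongr
        exact add_sq_le
    _ = _ := by rw [hl]; ring

lemma norm_sub_map_gC_pow_sq_le (m : ℕ) (v : E) :
    ‖v - π (gC ^ m) v‖ ^ 2 ≤ 200 * m * horizontalEnergy π v := by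
  have hlen : wordLen (gC ^ m) ^ 2 ≤ 100 * m := by
    calc wordLen (gC ^ m) ^ 2 ≤ (10 * m.sqrt) ^ 2 := by
          gcongr
          exact wordLen_gC_pow_le m
      _ = 100 * m.sqrt ^ 2 := by ring
      _ ≤ 100 * m := by
          gcongr
          exact m.sqrt_le'
  calc ‖v - π (gC ^ m) v‖ ^ 2 ≤ 2 * wordLen (gC ^ m) ^ 2 * horizontalEnergy π v :=
        norm_sub_map_sq_le_wordLen hπ _ v
    _ ≤ 2 * (100 * m) * horizontalEnergy π v := by
        have := horizontalEnergy_nonneg (π := π) v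
        gcongr
        exact_mod_cast hlen
    _ = _ := by ring

lemma norm_sub_map_gC_pow_sq_div_le (k : ℕ) (v : E) :
    ‖v - (π gC ^ 2 ^ k) v‖ ^ 2 / 2 ^ k ≤ 200 * horizontalEnergy π v := by
  have h := norm_sub_map_gC_pow_sq_le hπ (2 ^ k) v
  rw [Nat.cast_pow, Nat.cast_ofNat] at h
  rw [← map_pow, div_le_iff₀ (by positivity)]
  linarith

lemma norm_dyadicDiff_gC_sq_div_le (n : ℕ) (v : E) :
    ‖dyadicDiff (π gC) n v‖ ^ 2 / 2 ^ n ≤ 200 * horizontalEnergy π v := by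
  refine le_trans ?_ (norm_sub_map_gC_pow_sq_div_le hπ n v)
  rw [dyadicDiff_eq_dyadicAvg]
  gcongr
  exact norm_dyadicAvg_le (fun w => (hπ gC w).le) n _

lemma sum_norm_dyadicDiff_gC_sub_sq_div_le {δ : ℝ} (hδ : 0 < δ) (hE : IsTwoUniformlyConvex 2 δ E)
    (n : ℕ) (v : E) :
    ∑ k ∈ Finset.range n,
      ‖dyadicDiff (π gC) k v - (π gC ^ 2 ^ k) (dyadicDiff (π gC) k v)‖ ^ 2 / 2 ^ k
      ≤ 800 / δ * horizontalEnergy π v := by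
  have hsq (w : E) : ∑ k ∈ Finset.range n, ‖dyadicDiff (π gC) k w‖ ^ 2 ≤ 4 / δ * ‖w‖ ^ 2 := by
    rw [div_mul_eq_mul_div, le_div_iff₀' hδ]
    exact sum_norm_dyadicDiff_sq_le (fun w => (hπ gC w).le) hE n w
  calc _ ≤ ∑ k ∈ Finset.range n, 200 * horizontalEnergy π (dyadicDiff (π gC) k v) :=
        Finset.sum_le_sum fun k _ => norm_sub_map_gC_pow_sq_div_le hπ k _
    _ = 200 * (∑ k ∈ Finset.range n, ‖dyadicDiff (π gC) k (v - π gA v)‖ ^ 2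
          + ∑ k ∈ Finset.range n, ‖dyadicDiff (π gC) k (v - π gB v)‖ ^ 2) := by
        simp only [horizontalEnergy_dyadicDiff, ← Finset.mul_sum, Finset.sum_add_distrib]
    _ ≤ 200 * (4 / δ * ‖v - π gA v‖ ^ 2 + 4 / δ * ‖v - π gB v‖ ^ 2) := by
        gcongr <;> exact hsq _
    _ = 800 / δ * horizontalEnergy π v := by rw [horizontalEnergy]; ring

theorem sum_norm_sub_map_gC_pow_sq_div_le {δ : ℝ} (hδ : 0 < δ) (hE : IsTwoUniformlyConvex 2 δ E)
    (n : ℕ) (v : E) :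
    ∑ k ∈ Finset.range n, ‖v - π (gC ^ 2 ^ k) v‖ ^ 2 / 2 ^ k
      ≤ 8400 * (1 + 16 / δ) * horizontalEnergy π v := by
  have hT (w : E) : ‖π gC w‖ ≤ ‖w‖ := (hπ gC w).le
  simp only [map_pow]
  calc ∑ k ∈ Finset.range n, ‖v - (π gC ^ 2 ^ k) v‖ ^ 2 / 2 ^ k
      ≤ 14 * ∑ k ∈ Finset.range n, ‖dyadicDiff (π gC) k v‖ ^ 2 / 2 ^ k :=
        sum_norm_sub_pow_sq_div_le hT n v
    _ ≤ 14 * (3 * (200 * horizontalEnergy π v)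
          + 12 * (800 / δ * horizontalEnergy π v)) := by
        gcongr
        refine (sum_norm_dyadicDiff_sq_div_le hT n v).trans ?_
        gcongr
        · exact norm_dyadicDiff_gC_sq_div_le hπ n v
        · exact sum_norm_dyadicDiff_gC_sub_sq_div_le hπ hδ hE n v
    _ = 8400 * (1 + 16 / δ) * horizontalEnergy π v := by ring

end Poincare

section Localization

/-- A `1`-Lipschitz function on `ℍ` that equals `R` on `Ball R` and vanishes outside `Ball (2 * R)`;
the truncated subtraction is what makes it vanish there. -/
noncomputable def cutoff (R : ℕ) (x : DH) : ℕ := min R (2 * R - wordLen x)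

lemma cutoff_le (R : ℕ) (x : DH) : cutoff R x ≤ R :=
  min_le_left _ _

lemma cutoff_eq_of_mem_Ball {R : ℕ} {x : DH} (hx : x ∈ Ball R) : cutoff R x = R := by
  rw [mem_Ball] at hx
  unfold cutoff
  omega

lemma cutoff_eq_zero {R : ℕ} {x : DH} (hx : 2 * R ≤ wordLen x) : cutoff R x = 0 := by
  unfold cutoff
  omega

lemma abs_cutoff_sub_cutoff_mul_le_one (R : ℕ) (x : DH) {s : DH} (hs : s ∈ gens) :
    |(cutoff R x : ℝ) - cutoff R (x * s)| ≤ 1 := by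
  have hs1 := wordLen_le_one hs
  have hle := wordLen_mul_le x s
  have hge := wordLen_le_wordLen_mul_add x s
  have h : |(cutoff R x : ℤ) - cutoff R (x * s)| ≤ 1 := by
    unfold cutoff
    exact abs_le.2 ⟨by omega, by omega⟩
  exact_mod_cast h

variable {X : Type*} [NormedAddCommGroup X] [NormedSpace ℝ X]

lemma memℓp_cutoff_smul (R : ℕ) (f : DH → X) :
    Memℓp (fun x => (cutoff R x : ℝ) • f x) 2 := by
  refine Memℓp.of_exponent_ge
    (memℓp_zero ((finite_Ball (2 * R)).subset fun x hx => ?_)) zero_le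
  by_contra hxR
  rw [mem_Ball, not_le] at hxR
  exact hx (by rw [cutoff_eq_zero hxR.le, Nat.cast_zero, zero_smul])

/-- The finitely supported function on `ℍ` obtained by normalizing `f` at the identity and cutting
it off outside `Ball (2 * R)`; on `Ball R` it is `R` times a translate of `f`. -/
noncomputable def localize (R : ℕ) (f : DH → X) : lp (fun _ : DH => X) 2 :=
  ⟨fun x => (cutoff R x : ℝ) • (f x - f 1), memℓp_cutoff_smul R _⟩

lemma localize_apply (R : ℕ) (f : DH → X) (x : DH) :
    localize R f x = (cutoff R x : ℝ) • (f x - f 1) :=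
  rfl

lemma localize_eq_zero {R : ℕ} (f : DH → X) {x : DH} (hx : 2 * R ≤ wordLen x) :
    localize R f x = 0 := by
  rw [localize_apply, cutoff_eq_zero hx, Nat.cast_zero, zero_smul]

lemma localize_sub_localize {R : ℕ} (f : DH → X) {x y : DH} (hx : x ∈ Ball R) (hy : y ∈ Ball R) :
    localize R f x - localize R f y = (R : ℝ) • (f x - f y) := by
  rw [localize_apply, localize_apply, cutoff_eq_of_mem_Ball hx, cutoff_eq_of_mem_Ball hy,
    ← smul_sub, sub_sub_sub_cancel_right]

lemma localize_sub_localize_mul_eq_zero {R : ℕ} (f : DH → X) {x s : DH} (hs : s ∈ gens)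
    (h : x ∉ Ball (2 * R) ∨ x * s ∉ Ball (2 * R)) :
    localize R f x - localize R f (x * s) = 0 := by
  have hs1 := wordLen_le_one hs
  have hle := wordLen_mul_le x s
  have hge := wordLen_le_wordLen_mul_add x s
  rw [mem_Ball, mem_Ball] at h
  rw [localize_eq_zero f (by omega), localize_eq_zero f (by omega), sub_zero]

lemma norm_localize_sub_localize_mul_le {R : ℕ} {D : ℝ} (hD : 0 ≤ D) {f : DH → X}
    (hf : ∀ x ∈ Ball (2 * R), ∀ y ∈ Ball (2 * R), ‖f x - f y‖ ≤ D * dW x y)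
    (x : DH) {s : DH} (hs : s ∈ gens) :
    ‖localize R f x - localize R f (x * s)‖ ≤ 3 * R * D := by
  by_cases hx : x ∈ Ball (2 * R) ∧ x * s ∈ Ball (2 * R)
  swap
  · rw [localize_sub_localize_mul_eq_zero f hs (not_and_or.1 hx), norm_zero]
    positivity
  obtain ⟨hx, hxs⟩ := hx
  have hstep : ‖f x - f (x * s)‖ ≤ D := by
    refine (hf x hx _ hxs).trans (mul_le_of_le_one_right hD ?_)
    rw [dW_self_mul]
    exact_mod_cast wordLen_le_one hs
  have hsize : ‖f (x * s) - f 1‖ ≤ D * (2 * R) := by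
    refine (hf _ hxs 1 (mem_Ball.2 (by simp [wordLen_one]))).trans ?_
    rw [dW_one]
    gcongr
    exact_mod_cast mem_Ball.1 hxs
  have hsplit : localize R f x - localize R f (x * s)
      = (cutoff R x : ℝ) • (f x - f (x * s))
        + ((cutoff R x : ℝ) - cutoff R (x * s)) • (f (x * s) - f 1) := by
    rw [localize_apply, localize_apply]
    module
  calc ‖localize R f x - localize R f (x * s)‖
      ≤ cutoff R x * ‖f x - f (x * s)‖
        + |(cutoff R x : ℝ) - cutoff R (x * s)| * ‖f (x * s) - f 1‖ := by
        rw [hsplit]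
        refine (norm_add_le _ _).trans_eq ?_
        rw [norm_smul, norm_smul, Real.norm_natCast, Real.norm_eq_abs]
    _ ≤ R * D + 1 * (D * (2 * R)) := by
        gcongr
        · exact cutoff_le R x
        · exact abs_cutoff_sub_cutoff_mul_le_one R x hs
    _ = 3 * R * D := by ring

lemma norm_localize_sub_rightRegular_sq_le {R : ℕ} {D : ℝ} (hD : 0 ≤ D) {f : DH → X}
    (hf : ∀ x ∈ Ball (2 * R), ∀ y ∈ Ball (2 * R), ‖f x - f y‖ ≤ D * dW x y)
    {s : DH} (hs : s ∈ gens) :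
    ‖localize R f - rightRegular DH X s (localize R f)‖ ^ 2
      ≤ (Ball (2 * R)).ncard * (3 * R * D) ^ 2 := by
  refine norm_sq_lp_two_le_ncard_mul (finite_Ball _) (fun x hx => ?_) fun x => ?_ <;>
    rw [lp.coeFn_sub, Pi.sub_apply, rightRegular_apply]
  · exact localize_sub_localize_mul_eq_zero f hs (Or.inl hx)
  · gcongr
    exact norm_localize_sub_localize_mul_le hD hf x hs

lemma horizontalEnergy_localize_le {R : ℕ} (hR : 1 ≤ 2 * R) {D : ℝ} (hD : 0 ≤ D) {f : DH → X}
    (hf : ∀ x ∈ Ball (2 * R), ∀ y ∈ Ball (2 * R), ‖f x - f y‖ ≤ D * dW x y) :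
    horizontalEnergy (rightRegular DH X) (localize R f) ≤ 486 * (2 * R) ^ 4 * (R * D) ^ 2 := by
  have hcard : ((Ball (2 * R)).ncard : ℝ) ≤ 27 * (2 * R) ^ 4 := mod_cast ncard_Ball_le hR
  calc horizontalEnergy (rightRegular DH X) (localize R f)
      ≤ (Ball (2 * R)).ncard * (3 * R * D) ^ 2 + (Ball (2 * R)).ncard * (3 * R * D) ^ 2 :=
        add_le_add (norm_localize_sub_rightRegular_sq_le hD hf gA_mem_gens)
          (norm_localize_sub_rightRegular_sq_le hD hf gB_mem_gens)
    _ ≤ 27 * (2 * R) ^ 4 * (3 * R * D) ^ 2 + 27 * (2 * R) ^ 4 * (3 * R * D) ^ 2 := by gcongr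
    _ = 486 * (2 * R) ^ 4 * (R * D) ^ 2 := by ring

-- If `x ∈ Ball (12 * r)` then `x` and `x * c ^ m` lie in `Ball (22 * r)`, where nothing is cut off.
lemma le_norm_localize_sub_rightRegular_gC_pow_sq {r m : ℕ} (hm : m ≤ r ^ 2) {f : DH → X}
    (hf : ∀ x ∈ Ball (22 * r), ∀ y ∈ Ball (22 * r), (dW x y : ℝ) ≤ ‖f x - f y‖) :
    (r : ℝ) ^ 4 * ((22 * r) ^ 2 * m)
      ≤ ‖localize (22 * r) f - rightRegular DH X (gC ^ m) (localize (22 * r) f)‖ ^ 2 := by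
  have hcard : (r : ℝ) ^ 4 ≤ (Ball (12 * r)).ncard := mod_cast pow_four_le_ncard_Ball r
  refine (mul_le_mul_of_nonneg_right hcard (by positivity)).trans
    (ncard_mul_le_norm_sq_lp_two (finite_Ball _) fun x hx => ?_)
  have hlen : wordLen (gC ^ m) ≤ 10 * r :=
    (wordLen_gC_pow_le m).trans
      (Nat.mul_le_mul_left _ ((Nat.sqrt_le_sqrt hm).trans_eq r.sqrt_eq'))
  have hmul := wordLen_mul_le x (gC ^ m)
  rw [mem_Ball] at hx
  have hx22 : x ∈ Ball (22 * r) := mem_Ball.2 (by omega)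
  have hxc22 : x * gC ^ m ∈ Ball (22 * r) := mem_Ball.2 (by omega)
  have hlow : (wordLen (gC ^ m) : ℝ) ≤ ‖f x - f (x * gC ^ m)‖ := by
    simpa only [dW_self_mul] using hf x hx22 _ hxc22
  rw [lp.coeFn_sub, Pi.sub_apply, rightRegular_apply, localize_sub_localize f hx22 hxc22,
    norm_smul, Real.norm_natCast, Nat.cast_mul, Nat.cast_ofNat, mul_pow (22 * (r : ℝ)) ‖_‖]
  gcongr
  calc (m : ℝ) ≤ (wordLen (gC ^ m) : ℝ) ^ 2 := mod_cast le_wordLen_gC_pow_sq m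
    _ ≤ ‖f x - f (x * gC ^ m)‖ ^ 2 := by gcongr

end Localization

section Distortion

variable {X : Type*} [NormedAddCommGroup X] [NormedSpace ℝ X] {δ : ℝ}

theorem size_le_mul_sq_of_biLipschitz (hδ : 0 < δ) (hX : IsTwoUniformlyConvex 2 δ X) {r : ℕ}
    {D : ℝ} (hD : 0 ≤ D) {f : DH → X}
    (hf : ∀ x ∈ Ball (44 * r), ∀ y ∈ Ball (44 * r),
      (dW x y : ℝ) ≤ ‖f x - f y‖ ∧ ‖f x - f y‖ ≤ D * dW x y) :
    (r.size : ℝ) ≤ 8400 * (1 + 16 / δ) * (486 * 44 ^ 4) * D ^ 2 := by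
  rcases r.eq_zero_or_pos with rfl | hr
  · rw [Nat.size_zero, Nat.cast_zero]
    positivity
  set v := localize (22 * r) f
  have hball : Ball (22 * r) ⊆ Ball (44 * r) := fun x hx =>
    mem_Ball.2 ((mem_Ball.1 hx).trans (by omega))
  have hvert (k : ℕ) (hk : k ∈ Finset.range r.size) :
      (r : ℝ) ^ 4 * (22 * r) ^ 2 ≤ ‖v - rightRegular DH X (gC ^ 2 ^ k) v‖ ^ 2 / 2 ^ k := by
    have hkr : 2 ^ k ≤ r ^ 2 :=
      (Nat.lt_size.1 (Finset.mem_range.1 hk)).trans (Nat.le_self_pow two_ne_zero r)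
    have h := le_norm_localize_sub_rightRegular_gC_pow_sq hkr fun x hx y hy =>
      (hf x (hball hx) y (hball hy)).1
    rw [Nat.cast_pow, Nat.cast_ofNat, ← mul_assoc] at h
    exact (le_div_iff₀ (by positivity)).2 h
  have hball_two : Ball (2 * (22 * r)) = Ball (44 * r) := congrArg Ball (by ring)
  have hhor := horizontalEnergy_localize_le (R := 22 * r) (by omega) hD
    fun x hx y hy => (hf x (hball_two.subset hx) y (hball_two.subset hy)).2
  push_cast at hhor
  refine le_of_mul_le_mul_right ?_ (by positivity : 0 < (r : ℝ) ^ 4 * (22 * r) ^ 2)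
  calc (r.size : ℝ) * ((r : ℝ) ^ 4 * (22 * r) ^ 2)
      ≤ ∑ k ∈ Finset.range r.size, ‖v - rightRegular DH X (gC ^ 2 ^ k) v‖ ^ 2 / 2 ^ k := by
        simpa only [Finset.card_range, nsmul_eq_mul] using Finset.card_nsmul_le_sum _ _ _ hvert
    _ ≤ 8400 * (1 + 16 / δ) * horizontalEnergy (rightRegular DH X) v :=
        sum_norm_sub_map_gC_pow_sq_div_le (π := rightRegular DH X) norm_rightRegular hδ
          (hX.lp_two hδ.le) _ v
    _ ≤ 8400 * (1 + 16 / δ) * (486 * (2 * (22 * r)) ^ 4 * (22 * r * D) ^ 2) := by gcongr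
    _ = _ := by ring

lemma log_le_add_size_div {n : ℕ} (hn : 1 ≤ n) : Real.log n ≤ 44 + (n / 44).size := by
  have hdiv : n < 44 * (n / 44 + 1) := by omega
  have hn2 : n ≤ 44 * 2 ^ (n / 44).size :=
    hdiv.le.trans (Nat.mul_le_mul_left _ (Nat.lt_size_self _))
  calc Real.log n ≤ Real.log (44 * 2 ^ (n / 44).size) :=
        Real.log_le_log (mod_cast hn) (mod_cast hn2)
    _ = Real.log 44 + (n / 44).size * Real.log 2 := by
        rw [Real.log_mul (by norm_num) (by positivity), Real.log_pow]
    _ ≤ 44 + (n / 44).size * 1 := by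
        gcongr
        · exact Real.log_le_self (by norm_num)
        · exact Real.log_two_lt_d9.le.trans (by norm_num)
    _ = 44 + (n / 44).size := by rw [mul_one]

end Distortion

end DH

open DH in
theorem distortion_lower_bound_lp_le_two_general {X : Type*} [NormedAddCommGroup X]
    [NormedSpace ℝ X] {δ : ℝ} (hδ : 0 < δ) (hX : IsTwoUniformlyConvex 2 δ X) :
    ∃ K : ℝ, 0 < K ∧
      ∀ n : ℕ, 1 ≤ n → ∀ D : ℝ, 1 ≤ D → ∀ f : DH → X,
        (∀ x ∈ Ball n, ∀ y ∈ Ball n,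
          (dW x y : ℝ) ≤ ‖f x - f y‖ ∧ ‖f x - f y‖ ≤ D * (dW x y : ℝ)) →
        K * Real.sqrt (Real.log n) ≤ D := by
  set C : ℝ := 44 + 8400 * (1 + 16 / δ) * (486 * 44 ^ 4) with hC
  have hC0 : 0 < C := by positivity
  refine ⟨(√C)⁻¹, by positivity, fun n hn D hD f hf => ?_⟩
  have hball : Ball (44 * (n / 44)) ⊆ Ball n := fun x hx =>
    mem_Ball.2 ((mem_Ball.1 hx).trans (Nat.mul_div_le n 44))
  have hsize := size_le_mul_sq_of_biLipschitz hδ hX (by linarith : 0 ≤ D) fun x hx y hy =>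
    hf x (hball hx) y (hball hy)
  have hlog : Real.log n ≤ C * D ^ 2 := by
    rw [hC, add_mul]
    linarith [log_le_add_size_div hn, one_le_pow₀ hD (n := 2)]
  rw [inv_mul_le_iff₀ (by positivity)]
  calc √(Real.log n) ≤ √(C * D ^ 2) := Real.sqrt_le_sqrt hlog
    _ = √C * D := by rw [Real.sqrt_mul hC0.le, Real.sqrt_sq (by linarith)]

open DH in
/-- Corollary 1.3, case `p ∈ (1,2]`: the distortion of the ball `B_n` in `ℓ_p`
is at least a constant multiple of `√(log n)`. -/
theorem distortion_lower_bound_lp_le_two (p : ℝ) (hp1 : 1 < p) (hp2 : p ≤ 2)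
    [Fact (1 ≤ ENNReal.ofReal p)] :
    ∃ K : ℝ, 0 < K ∧
      ∀ n : ℕ, 2 ≤ n → ∀ D : ℝ, 1 ≤ D →
        ∀ f : DH → lp (fun _ : ℕ => ℝ) (ENNReal.ofReal p),
          (∀ x ∈ Ball n, ∀ y ∈ Ball n,
            (dW x y : ℝ) ≤ ‖f x - f y‖ ∧ ‖f x - f y‖ ≤ D * (dW x y : ℝ)) →
          K * Real.sqrt (Real.log n) ≤ D := by
  obtain ⟨K, hK, h⟩ := distortion_lower_bound_lp_le_two_general (by linarith)
    (isTwoUniformlyConvex_lp_real hp1.le hp2)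
  exact ⟨K, hK, fun n hn => h n (one_le_two.trans hn)⟩
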